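/- Let G be a finite group acting linearly on a finite-dimensional real vector space W. Then C^∞(W) is generated as a C^∞(W)^G-module by any finite set of polynomials that generates S(W^*) as a module over S(W^*)^G. -/

import Mathlib

/-!
A linear form `φ` on `W` satisfies, for every `g`, the equation `∏ h, (t - φ (h • w)) = 0` at
`t = φ (g • w)`. Newton interpolation at the nodes `φ (h • w)`, `h ∈ G`, therefore rewrites any
smooth function of `w` and `φ (g • w)` as a polynomial in `φ (g • w)` of degree less than `|G|`
whose coefficients depend smoothly on `w` alone. The Newton quotients are smooth by Hadamard's
lemma (`exists_smooth_quotient`), which needs smoothness of integrals depending on a parameter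
(`contDiff_integral_param`). Treating the coordinates of `g • w` one at a time
(`IsSpanned.of_smooth`) gives `f (g • w) = ∑ k, d k w * p k (g • w)` for all `g` and `w`, with
`d k` smooth and `p k` polynomial.

Each `p k` is a combination of the generators with invariant polynomial coefficients, so that
`f (g • w) = ∑ i, c i w * q i (g • w)` with `c i` smooth. This holds for every `g`, so averaging
each `c i` over `G` makes it invariant and keeps the identity `f = ∑ i, c i * q i`.

Since all the roots `φ (h • w)` are real, Newton interpolation takes the place of Malgrange's
preparation theorem.
-/

open scoped ContDiff

/-! ### Hadamard's lemma with parameters -/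

/-- Differentiation under the integral sign, iterated. -/
theorem contDiff_integral_param {X : Type*} [NormedAddCommGroup X] [NormedSpace ℝ X]
    [FiniteDimensional ℝ X] {F : X × ℝ → ℂ} (hF : ContDiff ℝ ∞ F) :
    ContDiff ℝ ∞ (fun x => ∫ s in (0 : ℝ)..1, F (x, s)) := by
  rw [contDiff_infty]
  intro n
  induction n generalizing F with
  | zero =>
    exact contDiff_zero.2
      (intervalIntegral.continuous_parametric_intervalIntegral_of_continuous'
        (f := fun x s => F (x, s)) hF.continuous 0 1)
  | succ n ih =>
    have hF' : ContDiff ℝ ∞ (fderiv ℝ F) := hF.fderiv_right (by simp)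
    let D : X × ℝ → X →L[ℝ] ℂ := fun p => (fderiv ℝ F p).comp (ContinuousLinearMap.inl ℝ X ℝ)
    have hD : Continuous D := hF'.continuous.clm_comp continuous_const
    have hder : ∀ x s, HasFDerivAt (fun x => F (x, s)) (D (x, s)) x := fun x s =>
      ((hF.differentiable (by simp)) (x, s)).hasFDerivAt.comp x (hasFDerivAt_prodMk_left x s)
    have key : ∀ x, HasFDerivAt (fun x => ∫ s in (0 : ℝ)..1, F (x, s))
        (∫ s in (0 : ℝ)..1, D (x, s)) x := by
      intro x
      obtain ⟨C, hC⟩ := ((isCompact_closedBall x 1).prod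
        (isCompact_Icc (a := (0 : ℝ)) (b := 1))).exists_bound_of_continuousOn hD.continuousOn
      refine intervalIntegral.hasFDerivAt_integral_of_dominated_of_fderiv_le
        (F' := fun x s => D (x, s)) (bound := fun _ => C)
        (Metric.closedBall_mem_nhds x one_pos) ?_ ?_ ?_ ?_ ?_ ?_
      · exact Filter.Eventually.of_forall fun y =>
          (hF.continuous.comp (by fun_prop : Continuous fun s : ℝ => (y, s))).aestronglyMeasurable
      · exact (hF.continuous.comp
          (by fun_prop : Continuous fun s : ℝ => (x, s))).intervalIntegrable _ _
      · exact (hD.comp (by fun_prop : Continuous fun s : ℝ => (x, s))).aestronglyMeasurable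
      · refine Filter.Eventually.of_forall fun t ht y hy => hC (y, t) ⟨hy, ?_⟩
        rw [Set.uIoc_of_le zero_le_one] at ht
        exact ⟨ht.1.le, ht.2⟩
      · exact intervalIntegrable_const
      · exact Filter.Eventually.of_forall fun t _ y _ => hder y t
    have hcast : ((n + 1 : ℕ) : WithTop ℕ∞) = (n : WithTop ℕ∞) + 1 := by push_cast; rfl
    rw [hcast, contDiff_succ_iff_fderiv_apply]
    refine ⟨fun x => (key x).differentiableAt, by simp, fun y => ?_⟩
    have : (fun x => fderiv ℝ (fun x => ∫ s in (0 : ℝ)..1, F (x, s)) x y)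
        = fun x => ∫ s in (0 : ℝ)..1, fderiv ℝ F (x, s) (y, 0) := by
      funext x
      rw [(key x).fderiv, ContinuousLinearMap.intervalIntegral_apply]
      · simp [D]
      · exact (hD.comp (by fun_prop : Continuous fun s : ℝ => (x, s))).intervalIntegrable _ _
    rw [this]
    exact ih (F := fun p => fderiv ℝ F p (y, 0)) (hF'.clm_apply contDiff_const)

/-- Hadamard's lemma: the difference quotient of a smooth function in one real variable is smooth
jointly in that variable and the parameters, on which the base point `a x` may depend. -/
theorem exists_smooth_quotient {X : Type*} [NormedAddCommGroup X] [NormedSpace ℝ X]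
    [FiniteDimensional ℝ X] {F : X × ℝ → ℂ} (hF : ContDiff ℝ ∞ F) {a : X → ℝ}
    (ha : ContDiff ℝ ∞ a) :
    ∃ F' : X × ℝ → ℂ, ContDiff ℝ ∞ F' ∧
      ∀ x t, F (x, t) = F (x, a x) + ((t - a x : ℝ) : ℂ) * F' (x, t) := by
  have hF' : ContDiff ℝ ∞ (fderiv ℝ F) := hF.fderiv_right (by simp)
  refine ⟨fun p => ∫ s in (0 : ℝ)..1, fderiv ℝ F (p.1, a p.1 + s * (p.2 - a p.1)) (0, 1), ?_, ?_⟩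
  · refine contDiff_integral_param
      (F := fun p : (X × ℝ) × ℝ =>
        fderiv ℝ F (p.1.1, a p.1.1 + p.2 * (p.1.2 - a p.1.1)) (0, 1)) ?_
    refine ContDiff.clm_apply (hF'.comp ?_) contDiff_const
    fun_prop
  · intro x t
    have hd : ∀ s : ℝ, HasDerivAt (fun s : ℝ => F (x, a x + s * (t - a x)))
        (((t - a x : ℝ) : ℂ) * fderiv ℝ F (x, a x + s * (t - a x)) (0, 1)) s := by
      intro s
      have h1 : HasDerivAt (fun s : ℝ => (x, a x + s * (t - a x))) ((0 : X), t - a x) s := by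
        refine (hasDerivAt_const s x).prodMk ?_
        simpa using ((hasDerivAt_id s).mul_const (t - a x)).const_add (a x)
      have h2 := ((hF.differentiable (by simp))
        (x, a x + s * (t - a x))).hasFDerivAt.comp_hasDerivAt s h1
      have h3 : ((0 : X), t - a x) = (t - a x) • ((0 : X), (1 : ℝ)) := by simp
      rw [h3, map_smul, Complex.real_smul] at h2
      exact h2
    have hc : Continuous fun s : ℝ =>
        ((t - a x : ℝ) : ℂ) * fderiv ℝ F (x, a x + s * (t - a x)) (0, 1) := by
      refine continuous_const.mul ((hF'.continuous.comp ?_).clm_apply continuous_const)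
      fun_prop
    have h := intervalIntegral.integral_eq_sub_of_hasDerivAt (a := 0) (b := 1)
      (fun s _ => hd s) (hc.intervalIntegrable _ _)
    rw [intervalIntegral.integral_const_mul] at h
    simp only [one_mul, zero_mul, add_zero, add_sub_cancel] at h
    rw [h]
    ring

/-! ### Families spanned by the generators -/

section Spanned

variable {W : Type*} [NormedAddCommGroup W] [NormedSpace ℝ W]
  {G : Type*} [Group G] [DistribMulAction G W]

/-- The family `F g : W → ℂ`, `g ∈ G`, is a combination of the families `w ↦ q (g • w)`, `q ∈ s`,
with smooth coefficients that do not depend on `g`. The coefficients need not be invariant. -/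
def IsSpanned (s : Finset (W → ℝ)) (F : G → W → ℂ) : Prop :=
  ∃ c : {q // q ∈ s} → W → ℂ, (∀ i, ContDiff ℝ ∞ (c i)) ∧
    ∀ g w, F g w = ∑ i, c i w * ((i.val (g • w) : ℝ) : ℂ)

/-- Every member of `P` is a combination of `s` with coefficients that are invariant members
of `P`. -/
def Generates (G : Type*) [Group G] [DistribMulAction G W] (P : Subalgebra ℝ (W → ℝ))
    (s : Finset (W → ℝ)) : Prop :=
  ∀ p ∈ P, ∃ c : {q // q ∈ s} → (W → ℝ),
      (∀ i, c i ∈ P ∧ ∀ (g : G) (w : W), c i (g • w) = c i w) ∧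
      p = ∑ i : {q // q ∈ s}, c i * i.val

namespace IsSpanned

variable {s : Finset (W → ℝ)} {F F' : G → W → ℂ}

theorem zero : IsSpanned s (fun (_ : G) (_ : W) => (0 : ℂ)) :=
  ⟨fun _ _ => 0, fun _ => contDiff_const, by simp⟩

theorem add (h : IsSpanned s F) (h' : IsSpanned s F') :
    IsSpanned s (fun g w => F g w + F' g w) := by
  obtain ⟨c, hc, e⟩ := h
  obtain ⟨c', hc', e'⟩ := h'
  exact ⟨fun i w => c i w + c' i w, fun i => (hc i).add (hc' i), fun g w => by
    simp only [e, e', add_mul, Finset.sum_add_distrib]⟩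

theorem sum {ι : Type*} (t : Finset ι) {K : ι → G → W → ℂ} (h : ∀ i ∈ t, IsSpanned s (K i)) :
    IsSpanned s (fun g w => ∑ i ∈ t, K i g w) := by
  classical
  induction t using Finset.induction_on with
  | empty => simpa using zero
  | insert a t ha ih =>
    simp only [Finset.sum_insert ha]
    exact (h a (by simp)).add (ih fun i hi => h i (by simp [hi]))

theorem smooth_mul {d : W → ℂ} (hd : ContDiff ℝ ∞ d) (h : IsSpanned s F) :
    IsSpanned s (fun g w => d w * F g w) := by
  obtain ⟨c, hc, e⟩ := h
  exact ⟨fun i w => d w * c i w, fun i => hd.mul (hc i), fun g w => by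
    simp only [e, Finset.mul_sum, mul_assoc]⟩

variable {P : Subalgebra ℝ (W → ℝ)}

/-- Invariance of the polynomial coefficients is what makes them independent of `g`. -/
theorem of_mem (hP : ∀ p ∈ P, ContDiff ℝ ∞ p) (hgen : Generates G P s) {p : W → ℝ} (hp : p ∈ P) :
    IsSpanned s (fun (g : G) w => ((p (g • w) : ℝ) : ℂ)) := by
  obtain ⟨c, hc, e⟩ := hgen p hp
  refine ⟨fun i w => (c i w : ℂ),
    fun i => Complex.ofRealCLM.contDiff.comp (hP _ (hc i).1), fun g w => ?_⟩
  rw [e]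
  simp [Finset.sum_apply, (hc _).2]

theorem of_param (hP : ∀ p ∈ P, ContDiff ℝ ∞ p) (hgen : Generates G P s) {d : W → ℂ}
    (hd : ContDiff ℝ ∞ d) : IsSpanned s (fun (_ : G) w => d w) := by
  simpa using smooth_mul hd (of_mem hP hgen P.one_mem)

theorem mul (hP : ∀ p ∈ P, ContDiff ℝ ∞ p) (hs : ∀ q ∈ s, q ∈ P) (hgen : Generates G P s)
    (h : IsSpanned s F) (h' : IsSpanned s F') : IsSpanned s (fun g w => F g w * F' g w) := by
  obtain ⟨c, hc, e⟩ := h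
  obtain ⟨c', hc', e'⟩ := h'
  have : (fun g w => F g w * F' g w) = fun g w => ∑ i : {q // q ∈ s}, ∑ j : {q // q ∈ s},
      (c i w * c' j w) * (((i.val * j.val) (g • w) : ℝ) : ℂ) := by
    funext g w
    rw [e, e', Finset.sum_mul_sum]
    refine Finset.sum_congr rfl fun i _ => Finset.sum_congr rfl fun j _ => ?_
    push_cast [Pi.mul_apply]
    ring
  rw [this]
  exact sum _ fun i _ => sum _ fun j _ =>
    smooth_mul ((hc i).mul (hc' j)) (of_mem hP hgen (P.mul_mem (hs _ i.2) (hs _ j.2)))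

variable [FiniteDimensional ℝ W] [SMulCommClass G ℝ W]

theorem contDiff_smul_action (g : G) : ContDiff ℝ ∞ (fun w : W => g • w) :=
  (DistribSMul.toLinearMap ℝ W g).toContinuousLinearMap.contDiff

theorem contDiff_linearForm (φ : W →ₗ[ℝ] ℝ) : ContDiff ℝ ∞ (fun w => φ w) :=
  φ.toContinuousLinearMap.contDiff

/-- Newton interpolation in one variable at the nodes `φ (h • w)`, `h ∈ S`: up to a family that is
spanned, a smooth function of `φ (g • w)` and parameters `(w, u (g • w))` is divisible by the product
of `φ (g • w) - φ (h • w)` over `h ∈ S`. The hypothesis `hK` covers the interpolation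
coefficients, which depend on the parameters alone. -/
theorem newton (hP : ∀ p ∈ P, ContDiff ℝ ∞ p) (hs : ∀ q ∈ s, q ∈ P) (hgen : Generates G P s)
    (hlin : ∀ φ : W →ₗ[ℝ] ℝ, ⇑φ ∈ P) {E : Type*} [NormedAddCommGroup E] [NormedSpace ℝ E]
    [FiniteDimensional ℝ E] (u : W → E)
    (hK : ∀ K : W × E → ℂ, ContDiff ℝ ∞ K → IsSpanned s (fun (g : G) w => K (w, u (g • w))))
    (φ : W →ₗ[ℝ] ℝ) {H : (W × E) × ℝ → ℂ} (hH : ContDiff ℝ ∞ H) (S : Finset G) :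
    ∃ H' : (W × E) × ℝ → ℂ, ContDiff ℝ ∞ H' ∧ ∃ R : G → W → ℂ, IsSpanned s R ∧
      ∀ g w, H ((w, u (g • w)), φ (g • w)) =
        R g w + (∏ h ∈ S, ((φ (g • w) - φ (h • w) : ℝ) : ℂ)) *
          H' ((w, u (g • w)), φ (g • w)) := by
  classical
  have hfac : ∀ h : G, IsSpanned s
      (fun (g : G) w => ((φ (g • w) - φ (h • w) : ℝ) : ℂ)) := by
    intro h
    have h1 : IsSpanned s (fun (g : G) w => ((φ (g • w) : ℝ) : ℂ)) := of_mem hP hgen (hlin φ)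
    have h2 : IsSpanned s (fun (_ : G) w => -((φ (h • w) : ℝ) : ℂ)) :=
      of_param hP hgen
        (Complex.ofRealCLM.contDiff.comp ((contDiff_linearForm φ).comp (contDiff_smul_action h))).neg
    simpa [sub_eq_add_neg] using h1.add h2
  have hprod : ∀ S : Finset G, IsSpanned s
      (fun (g : G) w => ∏ h ∈ S, ((φ (g • w) - φ (h • w) : ℝ) : ℂ)) := by
    intro S
    induction S using Finset.induction_on with
    | empty => simpa using of_param hP hgen (contDiff_const (c := (1 : ℂ)))
    | insert a t ha ih =>
      simp only [Finset.prod_insert ha]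
      exact mul hP hs hgen (hfac a) ih
  induction S using Finset.induction_on with
  | empty => exact ⟨H, hH, fun _ _ => 0, zero, by simp⟩
  | insert a t ha ih =>
    obtain ⟨H', hH', R, hR, e⟩ := ih
    have hnode : ContDiff ℝ ∞ (fun x : W × E => φ (a • x.1)) :=
      ((contDiff_linearForm φ).comp (contDiff_smul_action a)).comp contDiff_fst
    obtain ⟨H'', hH'', e'⟩ := exists_smooth_quotient hH' hnode
    refine ⟨H'', hH'', fun g w => R g w + (∏ h ∈ t, ((φ (g • w) - φ (h • w) : ℝ) : ℂ)) *
      H' ((w, u (g • w)), φ (a • w)), ?_, fun g w => ?_⟩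
    · exact hR.add (mul hP hs hgen (hprod t)
        (hK (fun x => H' (x, φ (a • x.1))) (hH'.comp (contDiff_id.prodMk hnode))))
    · rw [e, e', Finset.prod_insert ha]
      ring

/-- A smooth function of `w` and finitely many linear forms in `g • w` defines a spanned family.
The forms are eliminated one at a time: with all of `G` as the set of nodes, the remainder in
`newton` vanishes. -/
theorem of_smooth [Fintype G] (hP : ∀ p ∈ P, ContDiff ℝ ∞ p) (hs : ∀ q ∈ s, q ∈ P)
    (hgen : Generates G P s) (hlin : ∀ φ : W →ₗ[ℝ] ℝ, ⇑φ ∈ P) (k : ℕ)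
    (φ : Fin k → W →ₗ[ℝ] ℝ) {H : W × (Fin k → ℝ) → ℂ} (hH : ContDiff ℝ ∞ H) :
    IsSpanned s (fun (g : G) w => H (w, fun i => φ i (g • w))) := by
  induction k with
  | zero =>
    have h : IsSpanned s (fun (_ : G) w => H (w, 0)) :=
      of_param hP hgen (hH.comp (contDiff_id.prodMk contDiff_const))
    convert h using 5
  | succ k ih =>
    have hcons : ContDiff ℝ ∞
        (fun x : (W × (Fin k → ℝ)) × ℝ => (x.1.1, (Fin.cons x.2 x.1.2 : Fin (k + 1) → ℝ))) := by
      refine (contDiff_fst.comp contDiff_fst).prodMk (contDiff_pi.2 fun i => ?_)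
      refine Fin.cases ?_ (fun j => ?_) i
      · simpa using contDiff_snd
      · simp only [Fin.cons_succ]
        fun_prop
    obtain ⟨H', -, R, hR, e⟩ := newton hP hs hgen hlin (fun w i => φ (Fin.succ i) w)
      (fun K hK => ih (fun i => φ i.succ) hK) (φ 0) (hH.comp hcons) Finset.univ
    convert hR using 3 with g w
    have h0 : ∏ h : G, ((φ 0 (g • w) - φ 0 (h • w) : ℝ) : ℂ) = 0 :=
      Finset.prod_eq_zero (Finset.mem_univ g) (by simp)
    have h1 := e g w
    rw [h0, zero_mul, add_zero] at h1
    rw [← h1, Function.comp_apply]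
    congr 2
    funext i
    refine Fin.cases ?_ (fun j => ?_) i <;> simp

end IsSpanned

end Spanned

/-! ### Averaging the coefficients -/


/-- Let `G` be a finite group acting linearly on a finite-dimensional real
vector space `W`. Then `C^∞(W)` (smooth complex-valued functions on `W`) is generated as
a `C^∞(W)^G`-module by any finite set of polynomials that generates `S(W^*)` as a module
over `S(W^*)^G`. -/
theorem smooth_functions_generated_by_polynomial_generators
    {W : Type*} [NormedAddCommGroup W] [NormedSpace ℝ W] [FiniteDimensional ℝ W]
    {G : Type*} [Group G] [Fintype G] [DistribMulAction G W] [SMulCommClass G ℝ W]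
    (P : Subalgebra ℝ (W → ℝ))
    (hP : P = Algebra.adjoin ℝ {f : W → ℝ | ∃ φ : W →ₗ[ℝ] ℝ, f = ⇑φ})
    (s : Finset (W → ℝ)) (hs : ∀ q ∈ s, q ∈ P)
    -- `s` generates `S(W^*)` as a module over `S(W^*)^G`
    (hgen : ∀ p ∈ P, ∃ c : {q // q ∈ s} → (W → ℝ),
      (∀ i, c i ∈ P ∧ ∀ (g : G) (w : W), c i (g • w) = c i w) ∧
      p = ∑ i : {q // q ∈ s}, c i * i.val) :
    -- then `s` generates `C^∞(W)` as a module over `C^∞(W)^G`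
    ∀ f : W → ℂ, ContDiff ℝ (⊤ : ℕ∞) f → ∃ c : {q // q ∈ s} → (W → ℂ),
      (∀ i, ContDiff ℝ (⊤ : ℕ∞) (c i) ∧ ∀ (g : G) (w : W), c i (g • w) = c i w) ∧
      f = ∑ i : {q // q ∈ s}, c i * fun w => ((i.val w : ℝ) : ℂ) := by
  classical
  intro f hf
  have hsm : ∀ p ∈ P, ContDiff ℝ ∞ p := by
    intro p hp
    rw [hP] at hp
    induction hp using Algebra.adjoin_induction with
    | mem x hx =>
      obtain ⟨φ, rfl⟩ := hx
      exact IsSpanned.contDiff_linearForm φ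
    | algebraMap r => exact contDiff_const
    | add x y _ _ hx hy => exact hx.add hy
    | mul x y _ _ hx hy => exact hx.mul hy
  have hlin : ∀ φ : W →ₗ[ℝ] ℝ, ⇑φ ∈ P := fun φ => by
    rw [hP]
    exact Algebra.subset_adjoin ⟨φ, rfl⟩
  let b := Module.finBasis ℝ W
  have hH : ContDiff ℝ ∞
      (fun x : W × (Fin (Module.finrank ℝ W) → ℝ) => f (∑ i, x.2 i • b i)) := by
    refine hf.comp ?_
    fun_prop
  have hspan := IsSpanned.of_smooth (G := G) hsm hs hgen hlin _ (fun i => b.coord i) hH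
  obtain ⟨c, hc, e⟩ := hspan
  have hcard : (Fintype.card G : ℂ) ≠ 0 := by simp
  refine ⟨fun i w => (Fintype.card G : ℂ)⁻¹ * ∑ h : G, c i (h • w), fun i => ⟨?_, ?_⟩, ?_⟩
  · exact contDiff_const.mul
      (ContDiff.sum fun h _ => (hc i).comp (IsSpanned.contDiff_smul_action h))
  · intro g w
    simp only [smul_smul]
    congr 1
    exact Equiv.sum_comp (Equiv.mulRight g) fun h => c i (h • w)
  · funext w
    -- The identity for the group element `h⁻¹` at the point `h • w` returns `f w`.
    have hw : ∀ h : G, f w = ∑ i, c i (h • w) * ((i.val w : ℝ) : ℂ) := by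
      intro h
      have := e h⁻¹ (h • w)
      simp only [inv_smul_smul, Module.Basis.coord_apply, b.sum_repr] at this
      exact this
    have hsum : (Fintype.card G : ℂ) * f w
        = ∑ h : G, ∑ i, c i (h • w) * ((i.val w : ℝ) : ℂ) := by
      rw [← Finset.sum_congr rfl fun h _ => hw h]
      simp
    rw [Finset.sum_comm] at hsum
    rw [Finset.sum_apply, ← inv_mul_cancel_left₀ hcard (f w), hsum, Finset.mul_sum]
    refine Finset.sum_congr rfl fun i _ => ?_
    rw [Pi.mul_apply, mul_assoc, Finset.sum_mul]
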